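/- Let f : ℝⁿ → ℝ be continuous and positive-valued with epigraph L, and let K ⊆ ℝⁿ × ℝ be a nonempty closed set disjoint from L containing a point (x₀,y₀) with y₀ ≤ 0. For every x ∈ ℝⁿ and y ∈ ℝ: if y < G⁻(x) then d((x,y),K) < d((x,y),L), and if y > G⁺(x) then d((x,y),K) > d((x,y),L). -/

import Mathlib

open Metric Set

noncomputable section

/-- `ℝⁿ × ℝ` with the Euclidean (ℓ²) metric. -/
abbrev EucProd (n : ℕ) := WithLp 2 (EuclideanSpace ℝ (Fin n) × ℝ)

/-- The point of `ℝⁿ × ℝ` with first component `x` and last coordinate `y`. -/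
def pt {n : ℕ} (x : EuclideanSpace ℝ (Fin n)) (y : ℝ) : EucProd n :=
  (WithLp.equiv 2 (EuclideanSpace ℝ (Fin n) × ℝ)).symm (x, y)

/-- The epigraph of `f : ℝⁿ → ℝ`, viewed as a subset of `ℝⁿ × ℝ`. -/
def epigraph {n : ℕ} (f : EuclideanSpace ℝ (Fin n) → ℝ) : Set (EucProd n) :=
  {p | f ((WithLp.equiv 2 (EuclideanSpace ℝ (Fin n) × ℝ)) p).1 ≤
      ((WithLp.equiv 2 (EuclideanSpace ℝ (Fin n) × ℝ)) p).2}

/-- The upper equidistant function `G⁺` associated with the focal sets `K` and `L`: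
`G⁺(x) = sup {y | d((x,y),K) = d((x,y),L)}`. -/
def Gplus {n : ℕ} (K L : Set (EucProd n)) (x : EuclideanSpace ℝ (Fin n)) : ℝ :=
  sSup {y : ℝ | Metric.infDist (pt x y) K = Metric.infDist (pt x y) L}

/-- The lower equidistant function `G⁻` associated with the focal sets `K` and `L`:
`G⁻(x) = inf {y | d((x,y),K) = d((x,y),L)}`. -/
def Gminus {n : ℕ} (K L : Set (EucProd n)) (x : EuclideanSpace ℝ (Fin n)) : ℝ :=
  sInf {y : ℝ | Metric.infDist (pt x y) K = Metric.infDist (pt x y) L}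

/-!
Fix `x` and compare `y ↦ d((x, y), K)` with `y ↦ d((x, y), L)`. For `y ≥ f x` the point lies in `L`
and off the closed set `K`, so `L` is strictly nearer. For `y` very negative `K` is strictly nearer:
the point `(x₀, y₀)` of `K` beats every `q ∈ L`, because `q` is either horizontally farther from `x`
than `x₀` is, or lies over the closed ball of radius `d(x, x₀)` about `x`, where `f` is bounded
below by some `m > y₀` and `(y - m)² - (y - y₀)² → ∞` as `y → -∞`. By the intermediate value theorem
the sign of the difference cannot change without meeting an equidistant height.
-/

section Order

open Filter

variable {α β : Type*} [ConditionallyCompleteLinearOrder α] [TopologicalSpace α] [OrderTopology α]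
  [DenselyOrdered α] [LinearOrder β] [TopologicalSpace β] [OrderClosedTopology β]

theorem lt_of_lt_sInf_setOf_eq {g h : α → β} (hg : Continuous g) (hh : Continuous h)
    (hlow : ∀ᶠ y in atBot, g y < h y) {y : α} (hy : y < sInf {t | g t = h t}) : g y < h y := by
  have : Nonempty α := ⟨y⟩
  obtain ⟨b, hb⟩ := eventually_atBot.1 hlow
  have hbdd : BddBelow {t | g t = h t} := ⟨b, fun t ht => le_of_not_ge fun htb => (hb t htb).ne ht⟩
  by_contra! hle
  obtain ⟨c, hcy, hc⟩ := isPreconnected_Iic.intermediate_value₂ (min_le_left y b) le_rfl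
    hg.continuousOn hh.continuousOn (hb _ (min_le_right y b)).le hle
  exact (hy.trans_le (csInf_le hbdd hc)).not_ge hcy

theorem lt_of_sSup_setOf_eq_lt {g h : α → β} (hg : Continuous g) (hh : Continuous h)
    (hhigh : ∀ᶠ y in atTop, g y < h y) {y : α} (hy : sSup {t | g t = h t} < y) : g y < h y :=
  lt_of_lt_sInf_setOf_eq (α := αᵒᵈ) hg hh hhigh hy

end Order

open Filter in
theorem eventually_atBot_add_sq_sub_lt_sq_sub {a b : ℝ} (hab : a < b) (c : ℝ) :
    ∀ᶠ y in atBot, c + (y - a) ^ 2 < (y - b) ^ 2 := by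
  filter_upwards [eventually_lt_atBot ((a + b - c / (b - a)) / 2)] with y hy
  have hc : c < (a + b - 2 * y) * (b - a) := (div_lt_iff₀ (sub_pos.2 hab)).1 (by linarith)
  linarith

section InfDist

variable {X : Type*} [PseudoMetricSpace X] {K L : Set X} {p q : X}

theorem infDist_lt_infDist_of_mem_of_disjoint (hL : IsClosed L) (hne : L.Nonempty)
    (hdisj : Disjoint K L) (hp : p ∈ K) : infDist p K < infDist p L := by
  rw [infDist_zero_of_mem hp]
  exact (hL.notMem_iff_infDist_pos hne).1 (disjoint_left.1 hdisj hp)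

theorem infDist_lt_infDist_of_forall_dist_lt [ProperSpace X] (hL : IsClosed L) (hne : L.Nonempty)
    (hq : q ∈ K) (hlt : ∀ r ∈ L, dist p q < dist p r) : infDist p K < infDist p L := by
  obtain ⟨r, hr, hpr⟩ := hL.exists_infDist_eq_dist hne p
  exact hpr ▸ (infDist_le_dist_of_mem hq).trans_lt (hlt r hr)

end InfDist

section L2Prod

open WithLp

variable {E F : Type*} [PseudoMetricSpace E] [PseudoMetricSpace F]

theorem withLp_prod_dist_sq_eq_of_L2 (p q : WithLp 2 (E × F)) :
    dist p q ^ 2 = dist p.fst q.fst ^ 2 + dist p.snd q.snd ^ 2 := by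
  rw [prod_dist_eq_add (by simp)]
  simp only [ENNReal.toReal_ofNat, Real.rpow_ofNat, ← Real.sqrt_eq_rpow]
  exact Real.sq_sqrt (by positivity)

instance properSpace_withLp_prod (p : ENNReal) [Fact (1 ≤ p)] [ProperSpace E] [ProperSpace F] :
    ProperSpace (WithLp p (E × F)) :=
  (prod_lipschitzWith_ofLp p E F).properSpace (homeomorphProd p E F).isProperMap

end L2Prod

section Epigraph

open Filter WithLp

variable {E : Type*}

/-- The epigraph of `f : E → ℝ` in the `ℓ²` product `E × ℝ`; it extends `epigraph` to base spaces
other than `ℝⁿ`. -/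
def l2Epigraph (f : E → ℝ) : Set (WithLp 2 (E × ℝ)) :=
  {p | f p.fst ≤ p.snd}

/-- The heights `y` at which the point `(x, y)` of the vertical line over `x` is equidistant from
`K` and `L`. Its infimum and supremum are `G⁻(x)` and `G⁺(x)`. -/
def equidistantHeights [PseudoMetricSpace E] (K L : Set (WithLp 2 (E × ℝ))) (x : E) : Set ℝ :=
  {y | infDist (toLp 2 (x, y)) K = infDist (toLp 2 (x, y)) L}

theorem equidistantHeights_comm [PseudoMetricSpace E] (K L : Set (WithLp 2 (E × ℝ))) (x : E) :
    equidistantHeights K L x = equidistantHeights L K x :=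
  ext fun _ => eq_comm

variable {f : E → ℝ}

theorem toLp_mem_l2Epigraph {x : E} {y : ℝ} : toLp 2 (x, y) ∈ l2Epigraph f ↔ f x ≤ y :=
  Iff.rfl

theorem l2Epigraph_nonempty [Nonempty E] (f : E → ℝ) : (l2Epigraph f).Nonempty :=
  let ⟨x⟩ := ‹Nonempty E›
  ⟨toLp 2 (x, f x), toLp_mem_l2Epigraph.2 le_rfl⟩

theorem isClosed_l2Epigraph [TopologicalSpace E] (hf : LowerSemicontinuous f) :
    IsClosed (l2Epigraph f) :=
  hf.isClosed_epigraph.preimage (prod_continuous_ofLp 2 E ℝ)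

variable [PseudoMetricSpace E]

theorem continuous_infDist_toLp (K : Set (WithLp 2 (E × ℝ))) (x : E) :
    Continuous fun y : ℝ => infDist (toLp 2 (x, y)) K :=
  (continuous_infDist_pt K).comp ((prod_continuous_toLp 2 E ℝ).comp (.prodMk_right x))

variable [ProperSpace E]

theorem eventually_atBot_forall_mem_l2Epigraph_dist_lt (hf : LowerSemicontinuous f) {y₀ : ℝ}
    (hy₀ : ∀ z, y₀ < f z) (x x₀ : E) :
    ∀ᶠ y in atBot, ∀ q ∈ l2Epigraph f,
      dist (toLp 2 (x, y)) (toLp 2 (x₀, y₀)) < dist (toLp 2 (x, y)) q := by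
  obtain ⟨z, -, hz⟩ := (hf.lowerSemicontinuousOn _).exists_isMinOn
    ⟨x, mem_closedBall_self dist_nonneg⟩ (isCompact_closedBall x (dist x x₀))
  filter_upwards [eventually_atBot_add_sq_sub_lt_sq_sub (hy₀ z) (dist x x₀ ^ 2),
    eventually_le_atBot y₀] with y hgap hy q hq
  have hq' : f q.fst ≤ q.snd := hq
  refine lt_of_pow_lt_pow_left₀ 2 dist_nonneg ?_
  simp only [withLp_prod_dist_sq_eq_of_L2, toLp_fst, toLp_snd, Real.dist_eq, sq_abs]
  rcases le_or_gt (dist x q.fst) (dist x x₀) with hnear | hfar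
  · have hmin : f z ≤ f q.fst := hz (mem_closedBall'.2 hnear)
    have hheight : (y - f z) ^ 2 ≤ (y - q.snd) ^ 2 := by
      nlinarith [hy₀ z]
    linarith [sq_nonneg (dist x q.fst)]
  · have hheight : (y - y₀) ^ 2 ≤ (y - q.snd) ^ 2 := by
      nlinarith [hy₀ q.fst]
    have hdist : dist x x₀ ^ 2 < dist x q.fst ^ 2 := by gcongr
    linarith

theorem eventually_atBot_infDist_lt_infDist_l2Epigraph (hf : LowerSemicontinuous f)
    {K : Set (WithLp 2 (E × ℝ))} {x₀ : E} {y₀ : ℝ} (hx₀ : toLp 2 (x₀, y₀) ∈ K)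
    (hy₀ : ∀ z, y₀ < f z) (x : E) :
    ∀ᶠ y in atBot, infDist (toLp 2 (x, y)) K < infDist (toLp 2 (x, y)) (l2Epigraph f) := by
  have : Nonempty E := ⟨x⟩
  filter_upwards [eventually_atBot_forall_mem_l2Epigraph_dist_lt hf hy₀ x x₀] with y hy
  exact infDist_lt_infDist_of_forall_dist_lt (isClosed_l2Epigraph hf) (l2Epigraph_nonempty f) hx₀ hy

theorem stmt2_general (hf : LowerSemicontinuous f) {K : Set (WithLp 2 (E × ℝ))} (hK : IsClosed K)
    (hdisj : Disjoint K (l2Epigraph f)) {x₀ : E} {y₀ : ℝ} (hx₀ : toLp 2 (x₀, y₀) ∈ K)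
    (hy₀ : ∀ z, y₀ < f z) (x : E) (y : ℝ) :
    (y < sInf (equidistantHeights K (l2Epigraph f) x) →
        infDist (toLp 2 (x, y)) K < infDist (toLp 2 (x, y)) (l2Epigraph f)) ∧
      (sSup (equidistantHeights K (l2Epigraph f) x) < y →
        infDist (toLp 2 (x, y)) (l2Epigraph f) < infDist (toLp 2 (x, y)) K) := by
  have hcK := continuous_infDist_toLp K x
  have hcL := continuous_infDist_toLp (l2Epigraph f) x
  refine ⟨lt_of_lt_sInf_setOf_eq hcK hcL
    (eventually_atBot_infDist_lt_infDist_l2Epigraph hf hx₀ hy₀ x), fun hy => ?_⟩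
  have hhigh : ∀ᶠ t in atTop,
      infDist (toLp 2 (x, t)) (l2Epigraph f) < infDist (toLp 2 (x, t)) K := by
    filter_upwards [eventually_ge_atTop (f x)] with t ht
    exact infDist_lt_infDist_of_mem_of_disjoint hK ⟨_, hx₀⟩ hdisj.symm (toLp_mem_l2Epigraph.2 ht)
  rw [equidistantHeights_comm] at hy
  exact lt_of_sSup_setOf_eq_lt hcL hcK hhigh hy

end Epigraph

theorem stmt2 {n : ℕ} (f : EuclideanSpace ℝ (Fin n) → ℝ) (hf : Continuous f)
    (hfpos : ∀ x, 0 < f x)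
    (L : Set (EucProd n)) (hL : L = epigraph f)
    (K : Set (EucProd n)) (hKcl : IsClosed K) (hKne : K.Nonempty)
    (hdisj : K ∩ L = ∅)
    (x₀ : EuclideanSpace ℝ (Fin n)) (y₀ : ℝ) (hx₀ : pt x₀ y₀ ∈ K) (hy₀ : y₀ ≤ 0)
    (x : EuclideanSpace ℝ (Fin n)) (y : ℝ) :
    (y < Gminus K L x → Metric.infDist (pt x y) K < Metric.infDist (pt x y) L) ∧
      (Gplus K L x < y → Metric.infDist (pt x y) L < Metric.infDist (pt x y) K) := by
  subst hL
  exact stmt2_general hf.lowerSemicontinuous hKcl (disjoint_iff_inter_eq_empty.2 hdisj) hx₀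
    (fun z => hy₀.trans_lt (hfpos z)) x y

end
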